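/- For the root system R of type C_n with n ≥ 3, the induced map ρ: Λ_w∨/Λ_r∨ → Λ_w/Λ_r is zero if n is even, and is an isomorphism (of groups of order 2) if n is odd. -/

import Mathlib

/-!
In orthogonal coordinates `e 0, …, e m` of `V` with dual basis `ε 0, …, ε m` of `V*` (`n = m + 1`),
the simple roots are `e i - e (i+1)` and `2 e m`, and the simple coroots are `ε i - ε (i+1)`
and `ε m`. From `φ(α∨) = |α∨|² α` one gets `φ(ε i) = 2 d e i`, where `d` is the square length of
the last simple coroot. The lattices are then read off:

* `Λ_r` consists of the integral vectors with even coordinate sum (`mem_rootLattice`,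
  `coords_of_mem`);
* `Λ_w` has integral coordinates (`weight_coords`), and `Λ_r∨` contains every integral
  combination of the `ε i` (`mem_corootLattice`);
* `Λ_w∨` has half-integral coordinates, either all integral or none (`coweight_coords`).

Once `d = 1`, the map `φ` doubles coordinates, so a coweight maps to an integral vector whose
coordinates all have the same parity. If `n` is even the coordinate sum is even and the image is
in `Λ_r`. If `n` is odd the sum is odd exactly for the coweights with non-integral coordinates, and
the spin coweight `(ε 0 + ⋯ + ε m) / 2` represents the nonzero classes on both sides.

The normalization gives `d = 1` only if no coroot is shorter than the last simple one. The roots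
are known only to contain the given simple roots and to lie in their integral span, so this needs
an argument: `dlen_cases` shows that every coroot has square length `d` or `2 d`, through the
arithmetic lemma `int_cases`. A root of square length `2 M` in the coordinates is
compared with the short simple roots by Cauchy–Schwarz (giving `M ≤ 4`); integrality excludes
`M = 3` and reducedness excludes `M = 4`. A root orthogonal to all of them has equal coordinates,
which forces `n = 4` and `M = 2`.
-/

open Module

/-- A reduced root system `R` in a real vector space `V`, together with the
`Aut(R)`-invariant inner products on `V` and on `V* = Dual ℝ V`. -/
structure RootSystemData (V : Type) [AddCommGroup V] [Module ℝ V] : Type where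
  /-- the (finite) set of roots -/
  roots : Finset V
  /-- the coroot `α∨ ∈ V*` attached to a root `α` -/
  coroot : V → Module.Dual ℝ V
  span_eq_top : Submodule.span ℝ (roots : Set V) = ⊤
  root_ne_zero : ∀ α ∈ roots, α ≠ (0 : V)
  coroot_self : ∀ α ∈ roots, coroot α α = 2
  reflect_mem : ∀ α ∈ roots, ∀ β ∈ roots, β - coroot α β • α ∈ roots
  crystallographic : ∀ α ∈ roots, ∀ β ∈ roots, ∃ n : ℤ, coroot α β = (n : ℝ)
  reduced : ∀ α ∈ roots, ∀ t : ℝ, t • α ∈ roots → t = 1 ∨ t = -1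
  /-- the `Aut(R)`-invariant inner product on `V` -/
  B : V →ₗ[ℝ] V →ₗ[ℝ] ℝ
  B_symm : ∀ x y, B x y = B y x
  B_pos : ∀ x, x ≠ 0 → 0 < B x x
  B_invariant : ∀ σ : V ≃ₗ[ℝ] V, (∀ α ∈ roots, σ α ∈ roots) →
    ∀ α ∈ roots, ∀ β ∈ roots, B (σ α) (σ β) = B α β
  coroot_eq : ∀ α ∈ roots, ∀ x : V, coroot α x = 2 * B α x / B α α
  /-- the `Aut(R)`-invariant inner product on `V*` (for the dual root system `R∨`) -/
  Bd : Module.Dual ℝ V →ₗ[ℝ] Module.Dual ℝ V →ₗ[ℝ] ℝ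
  Bd_symm : ∀ x y, Bd x y = Bd y x
  Bd_pos : ∀ x, x ≠ 0 → 0 < Bd x x
  /-- the coroot of `α∨` in the dual root system `R∨` is evaluation at `α` -/
  dual_coroot_eq : ∀ α ∈ roots, ∀ y : Module.Dual ℝ V,
    y α = 2 * Bd (coroot α) y / Bd (coroot α) (coroot α)

namespace RootSystemData

variable {V : Type} [AddCommGroup V] [Module ℝ V] (D : RootSystemData V)

/-- `x` and `y` lie in the same irreducible component of the root system. -/
def SameComponent (x y : V) : Prop :=
  Relation.ReflTransGen (fun a b => a ∈ D.roots ∧ b ∈ D.roots ∧ D.B a b ≠ 0) x y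

/-- `R` is irreducible. -/
def IsIrreducible : Prop :=
  D.roots.Nonempty ∧ ∀ α ∈ D.roots, ∀ β ∈ D.roots, D.SameComponent α β

/-- `R` is simply laced: all roots have the same length. -/
def IsSimplyLaced : Prop := ∀ α ∈ D.roots, ∀ β ∈ D.roots, D.B α α = D.B β β

/-- `α` is a root that is short within its irreducible component. -/
def ShortRoot (α : V) : Prop :=
  α ∈ D.roots ∧ ∀ β ∈ D.roots, D.SameComponent α β → D.B α α ≤ D.B β β

/-- `α∨` is a coroot that is short within its irreducible component of `R∨`
(equivalently, `α` is a long root of its component). -/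
def ShortCoroot (α : V) : Prop :=
  α ∈ D.roots ∧ ∀ β ∈ D.roots, D.SameComponent α β →
    D.Bd (D.coroot α) (D.coroot α) ≤ D.Bd (D.coroot β) (D.coroot β)

/-- normalization: short roots in every irreducible component have square-length `1`. -/
def NormalizedPrimal : Prop := ∀ α, D.ShortRoot α → D.B α α = 1

/-- normalization: short coroots in every irreducible component have square-length `1`. -/
def NormalizedDual : Prop := ∀ α, D.ShortCoroot α → D.Bd (D.coroot α) (D.coroot α) = 1

/-- the weight lattice `Λ_w ⊆ V`. -/
def weightLattice : Set V := {x | ∀ α ∈ D.roots, ∃ n : ℤ, D.coroot α x = (n : ℝ)}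

/-- the root lattice `Λ_r ⊆ V`. -/
def rootLattice : AddSubgroup V := AddSubgroup.closure (D.roots : Set V)

/-- the coweight lattice `Λ_w∨ ⊆ V*`. -/
def coweightLattice : Set (Module.Dual ℝ V) := {x | ∀ α ∈ D.roots, ∃ n : ℤ, x α = (n : ℝ)}

/-- the coroot lattice `Λ_r∨ ⊆ V*`. -/
def corootLattice : AddSubgroup (Module.Dual ℝ V) :=
  AddSubgroup.closure (D.coroot '' (D.roots : Set V))

end RootSystemData

/-- The Cartan matrix of type `C_n` (Bourbaki numbering, 0-indexed):
entry `(i, j)` is `⟨α_i, α_j∨⟩`; the last simple root `α_{n-1}` is long and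
`⟨α_{n-1}, α_{n-2}∨⟩ = -2`. -/
def cartanC (n : ℕ) (i j : Fin n) : ℤ :=
  if i = j then 2
  else if i.val + 1 = j.val ∨ j.val + 1 = i.val then
    (if i.val + 1 = n ∧ j.val + 2 = n then -2 else -1)
  else 0

/-! ### Coroot lengths and the map `φ` -/

namespace RootSystemData

variable {V : Type} [AddCommGroup V] [Module ℝ V] {D : RootSystemData V}

/-- The square length of the coroot `α∨`, that is, the factor `d_α` in `φ(α∨) = d_α α`. -/
noncomputable def dlen (D : RootSystemData V) (α : V) : ℝ := D.Bd (D.coroot α) (D.coroot α)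

lemma dlen_pos {α : V} (hα : α ∈ D.roots) : 0 < D.dlen α := by
  refine D.Bd_pos _ fun h => ?_
  have := D.coroot_self α hα
  rw [h] at this
  simp at this

lemma two_mul_Bd {α : V} (hα : α ∈ D.roots) (y : Module.Dual ℝ V) :
    2 * D.Bd (D.coroot α) y = y α * D.dlen α := by
  have h := D.dual_coroot_eq α hα y
  have h0 := (dlen_pos hα).ne'
  unfold dlen at *
  rw [h]
  field_simp

lemma phi_coroot [FiniteDimensional ℝ V] {φ : Module.Dual ℝ V →ₗ[ℝ] V}
    (hφ : ∀ x y : Module.Dual ℝ V, x (φ y) = 2 * D.Bd x y) {α : V} (hα : α ∈ D.roots) :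
    φ (D.coroot α) = D.dlen α • α := by
  rw [← sub_eq_zero, ← Module.forall_dual_apply_eq_zero_iff ℝ]
  intro x
  rw [map_sub, hφ, D.Bd_symm, two_mul_Bd hα, map_smul, smul_eq_mul]
  ring

lemma dlen_mul_comm {α β : V} (hα : α ∈ D.roots) (hβ : β ∈ D.roots) :
    D.dlen α * D.coroot β α = D.dlen β * D.coroot α β := by
  have h1 := two_mul_Bd hα (D.coroot β)
  have h2 := two_mul_Bd hβ (D.coroot α)
  rw [D.Bd_symm] at h2
  linarith

/-! ### Orthogonal coordinates of type `C` -/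

/-- Orthogonal coordinates for a root system whose simple roots `b 0, …, b m` have the
Cartan matrix of type `C_{m+1}`: vectors `e 0, …, e m` of `V` with dual basis
`ε 0, …, ε m` of `V*`, in which the simple roots are `e i - e (i+1)` and `2 e m`, and the simple
coroots are `ε i - ε (i+1)` and `ε m`. The real number `d` is the square length of the
last simple coroot. Only indices up to `m` are meaningful. -/
structure FrameC (D : RootSystemData V) (φ : Module.Dual ℝ V →ₗ[ℝ] V) (m : ℕ) (b : ℕ → V)
    (e : ℕ → V) (ε : ℕ → Module.Dual ℝ V) (d : ℝ) : Prop where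
  mem : ∀ i ≤ m, b i ∈ D.roots
  gen : ∀ α ∈ D.roots, α ∈ AddSubgroup.closure (b '' Set.Iic m)
  b_eq : ∀ i < m, b i = e i - e (i + 1)
  b_last : b m = (2 : ℝ) • e m
  c_eq : ∀ i < m, D.coroot (b i) = ε i - ε (i + 1)
  c_last : D.coroot (b m) = ε m
  dual : ∀ i ≤ m, ∀ j ≤ m, ε i (e j) = if i = j then 1 else 0
  expand : ∀ v : V, v = ∑ i ∈ Finset.range (m + 1), ε i v • e i
  phi : ∀ i ≤ m, φ (ε i) = (2 * d) • e i
  d_eq : d = D.dlen (b m)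

/-- The frame is obtained from the simple roots and coroots by partial sums from the long end of
the Dynkin diagram: `e k = b k + ⋯ + b (m-1) + b m / 2` and `ε k = b k∨ + ⋯ + b m∨`. -/
lemma exists_frameC [FiniteDimensional ℝ V] {φ : Module.Dual ℝ V →ₗ[ℝ] V}
    (hφ : ∀ x y : Module.Dual ℝ V, x (φ y) = 2 * D.Bd x y) {m : ℕ} (hm : 2 ≤ m) (b : ℕ → V)
    (hb : ∀ i ≤ m, b i ∈ D.roots)
    (hspan : Submodule.span ℝ (b '' Set.Iic m) = ⊤)
    (hgen : ∀ α ∈ D.roots, α ∈ AddSubgroup.closure (b '' Set.Iic m))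
    (hA : ∀ i ≤ m, ∀ j ≤ m, D.coroot (b j) (b i) = if i = j then 2 else
      if i + 1 = j ∨ j + 1 = i then (if i = m ∧ j + 1 = m then -2 else -1) else 0) :
    ∃ e ε d, FrameC D φ m b e ε d := by
  set ε : ℕ → Module.Dual ℝ V := fun k => ∑ j ∈ Finset.Ico k (m + 1), D.coroot (b j) with hε
  set e : ℕ → V := fun k => ∑ j ∈ Finset.Ico k m, b j + (1 / 2 : ℝ) • b m with he
  have ε_top : ε (m + 1) = 0 := by simp [hε]
  have ε_step : ∀ k ≤ m, ε k = D.coroot (b k) + ε (k + 1) := by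
    intro k hk
    exact Finset.sum_eq_sum_Ico_succ_bot (by omega) _
  have e_top : e m = (1 / 2 : ℝ) • b m := by simp [he]
  have e_step : ∀ k < m, e k = b k + e (k + 1) := by
    intro k hk
    simp only [he]
    rw [Finset.sum_eq_sum_Ico_succ_bot hk, add_assoc]
  have hεb : ∀ j ≤ m, ∀ i ≤ m + 1, ε i (b j) =
      if j = m then (if i = m then 2 else 0) else
        (if i = j then 1 else 0) - (if i = j + 1 then 1 else 0) := by
    intro j hj i hi
    induction hi using Nat.decreasingInduction with
    | self =>
      rw [ε_top, LinearMap.zero_apply]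
      split_ifs <;> first | omega | norm_num
    | of_succ k hk ih =>
      rw [ε_step k (by omega), LinearMap.add_apply, ih, hA j hj k (by omega)]
      split_ifs <;> first | omega | norm_num
  have hdual : ∀ i ≤ m, ∀ j ≤ m, ε i (e j) = if i = j then 1 else 0 := by
    intro i hi j hj
    induction hj using Nat.decreasingInduction with
    | self =>
      rw [e_top, map_smul, hεb m le_rfl i (by omega), if_pos rfl]
      split_ifs <;> norm_num
    | of_succ k hk ih =>
      rw [e_step k hk, map_add, ih, hεb k (by omega) i (by omega)]
      split_ifs <;> first | omega | norm_num
  have hd : ∀ i < m, D.dlen (b i) = 2 * D.dlen (b m) := by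
    have key : ∀ i (_ : i ≤ m - 1), D.dlen (b i) = 2 * D.dlen (b m) := by
      intro i hi
      induction hi using Nat.decreasingInduction with
      | self =>
        have h := dlen_mul_comm (hb (m - 1) (by omega)) (hb m le_rfl)
        rw [hA _ (by omega) _ le_rfl, hA _ le_rfl _ (by omega)] at h
        rw [if_neg (by omega), if_pos (by omega), if_neg (by omega), if_neg (by omega),
          if_pos (by omega), if_pos (by omega)] at h
        linarith
      | of_succ k hk ih =>
        have h := dlen_mul_comm (hb k (by omega)) (hb (k + 1) (by omega))
        rw [hA _ (by omega) _ (by omega), hA _ (by omega) _ (by omega)] at h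
        rw [if_neg (by omega), if_pos (by omega), if_neg (by omega), if_neg (by omega),
          if_pos (by omega), if_neg (by omega)] at h
        linarith
    exact fun i hi => key i (by omega)
  refine ⟨e, ε, D.dlen (b m), hb, hgen, ?_, ?_, ?_, ?_, hdual, ?_, ?_, rfl⟩
  · intro i hi
    rw [e_step i hi, add_sub_cancel_right]
  · rw [e_top, smul_smul]
    norm_num
  · intro i hi
    rw [ε_step i hi.le, add_sub_cancel_right]
  · rw [ε_step m le_rfl, ε_top, add_zero]
  · have hlast : ∀ j ≤ m, e j = ∑ i ∈ Finset.range (m + 1), ε i (e j) • e i := by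
      intro j hj
      rw [Finset.sum_eq_single_of_mem j (by simp; omega)]
      · rw [hdual j hj j hj, if_pos rfl, one_smul]
      · intro i hi hij
        rw [hdual i (by simp at hi; omega) j hj, if_neg hij, zero_smul]
    have hlin : LinearMap.id = ∑ i ∈ Finset.range (m + 1), (ε i).smulRight (e i) := by
      refine LinearMap.ext_on hspan ?_
      rintro _ ⟨j, hj, rfl⟩
      simp only [Set.mem_Iic] at hj
      simp only [LinearMap.id_apply, LinearMap.sum_apply, LinearMap.smulRight_apply]
      rcases hj.lt_or_eq with hj | rfl
      · have : b j = e j - e (j + 1) := by rw [e_step j hj, add_sub_cancel_right]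
        rw [this]
        simp only [map_sub, sub_smul, Finset.sum_sub_distrib]
        rw [← hlast j hj.le, ← hlast (j + 1) hj]
      · have : b j = (2 : ℝ) • e j := by rw [e_top, smul_smul]; norm_num
        rw [this]
        simp only [map_smul, smul_assoc, ← Finset.smul_sum]
        rw [← hlast j le_rfl]
    intro v
    have := congrArg (fun f => f v) hlin
    simpa using this
  · intro i hi
    induction hi using Nat.decreasingInduction with
    | self =>
      rw [ε_step m le_rfl, ε_top, add_zero, phi_coroot hφ (hb m le_rfl), e_top, smul_smul]
      congr 1
      ring
    | of_succ k hk ih =>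
      rw [ε_step k hk.le, map_add, ih, phi_coroot hφ (hb k hk.le), hd k hk, ← smul_add, ← e_step k hk]

namespace FrameC

variable {φ : Module.Dual ℝ V →ₗ[ℝ] V} {m : ℕ} {b e : ℕ → V} {ε : ℕ → Module.Dual ℝ V} {d : ℝ}

lemma d_pos (F : FrameC D φ m b e ε d) : 0 < d := F.d_eq ▸ dlen_pos (F.mem m le_rfl)

lemma apply_sum (F : FrameC D φ m b e ε d) {i : ℕ} (hi : i ≤ m) (a : ℕ → ℝ) :
    ε i (∑ j ∈ Finset.range (m + 1), a j • e j) = a i := by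
  rw [map_sum, Finset.sum_eq_single_of_mem i (by simp; omega)]
  · rw [map_smul, F.dual i hi i hi, if_pos rfl, smul_eq_mul, mul_one]
  · intro j hj hij
    rw [map_smul, F.dual i hi j (by simp at hj; omega), if_neg (Ne.symm hij), smul_zero]

lemma expand_dual (F : FrameC D φ m b e ε d) (x : Module.Dual ℝ V) :
    x = ∑ i ∈ Finset.range (m + 1), x (e i) • ε i := by
  ext v
  conv_lhs => rw [F.expand v]
  simp [mul_comm]

lemma phi_eq (F : FrameC D φ m b e ε d) (x : Module.Dual ℝ V) :
    φ x = ∑ i ∈ Finset.range (m + 1), (2 * d * x (e i)) • e i := by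
  conv_lhs => rw [F.expand_dual x]
  rw [map_sum]
  refine Finset.sum_congr rfl fun i hi => ?_
  rw [map_smul, F.phi i (by simp at hi; omega), smul_smul, mul_comm]

lemma eps_phi (F : FrameC D φ m b e ε d) (x : Module.Dual ℝ V) {i : ℕ} (hi : i ≤ m) :
    ε i (φ x) = 2 * d * x (e i) := by
  rw [F.phi_eq, F.apply_sum hi fun i => 2 * d * x (e i)]

/-! ### The lattices in coordinates -/

lemma b_mem (F : FrameC D φ m b e ε d) {i : ℕ} (hi : i ≤ m) : b i ∈ D.rootLattice :=
  AddSubgroup.subset_closure (F.mem i hi)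

lemma sub_mem_rootLattice (F : FrameC D φ m b e ε d) {i : ℕ} (hi : i ≤ m) :
    e i - e m ∈ D.rootLattice := by
  induction hi using Nat.decreasingInduction with
  | self => simp
  | of_succ k hk ih =>
    have := add_mem (F.b_mem hk.le) ih
    rwa [F.b_eq k hk, sub_add_sub_cancel] at this

lemma eps_mem_corootLattice (F : FrameC D φ m b e ε d) {i : ℕ} (hi : i ≤ m) :
    ε i ∈ D.corootLattice := by
  induction hi using Nat.decreasingInduction with
  | self => exact AddSubgroup.subset_closure ⟨b m, F.mem m le_rfl, F.c_last⟩
  | of_succ k hk ih =>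
    have : D.coroot (b k) ∈ D.corootLattice :=
      AddSubgroup.subset_closure ⟨b k, F.mem k hk.le, rfl⟩
    have := add_mem this ih
    rwa [F.c_eq k hk, sub_add_cancel] at this

/-- Vectors with integral coordinates and even coordinate sum lie in the root lattice. -/
lemma mem_rootLattice (F : FrameC D φ m b e ε d) {v : V} (a : ℕ → ℤ)
    (ha : ∀ i ≤ m, ε i v = a i) (hs : Even (∑ i ∈ Finset.range (m + 1), a i)) :
    v ∈ D.rootLattice := by
  obtain ⟨k, hk⟩ := hs
  have h : v = ∑ i ∈ Finset.range (m + 1), a i • (e i - e m) + k • b m := by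
    have h1 : k • b m = (∑ i ∈ Finset.range (m + 1), a i) • e m := by
      rw [F.b_last, hk, ← Int.cast_smul_eq_zsmul ℝ, ← Int.cast_smul_eq_zsmul ℝ, smul_smul]
      congr 1
      push_cast
      ring
    rw [h1, Finset.sum_smul, ← Finset.sum_add_distrib]
    conv_lhs => rw [F.expand v]
    refine Finset.sum_congr rfl fun i hi => ?_
    rw [ha i (by simp at hi; omega), smul_sub, sub_add_cancel, Int.cast_smul_eq_zsmul]
  rw [h]
  refine add_mem (sum_mem fun i hi => zsmul_mem (F.sub_mem_rootLattice ?_) _)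
    (zsmul_mem (F.b_mem le_rfl) _)
  simp at hi
  omega

/-- Conversely, vectors of the root lattice have integral coordinates with even sum. -/
lemma coords_of_mem (F : FrameC D φ m b e ε d) {v : V} (hv : v ∈ D.rootLattice) :
    ∃ a : ℕ → ℤ, (∀ i ≤ m, ε i v = a i) ∧ Even (∑ i ∈ Finset.range (m + 1), a i) := by
  have hle : D.rootLattice ≤ AddSubgroup.closure (b '' Set.Iic m) :=
    (AddSubgroup.closure_le _).2 fun α hα => F.gen α hα
  induction hle hv using AddSubgroup.closure_induction with
  | mem x hx =>
    obtain ⟨j, hj, rfl⟩ := hx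
    simp only [Set.mem_Iic] at hj
    rcases hj.lt_or_eq with hj | rfl
    · refine ⟨fun i => (if i = j then 1 else 0) - (if i = j + 1 then 1 else 0), ?_, ?_⟩
      · intro i hi
        rw [F.b_eq j hj, map_sub, F.dual i hi j hj.le, F.dual i hi (j + 1) hj]
        push_cast
        rfl
      · rw [Finset.sum_sub_distrib, Finset.sum_ite_eq', Finset.sum_ite_eq']
        rw [if_pos (by simp; omega), if_pos (by simp; omega)]
        simp
    · refine ⟨fun i => 2 * (if i = j then 1 else 0), ?_, ?_⟩
      · intro i hi
        rw [F.b_last, map_smul, F.dual i hi j le_rfl, smul_eq_mul]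
        push_cast
        rfl
      · rw [← Finset.mul_sum]
        exact even_two_mul _
  | zero => exact ⟨0, by simp, by simp⟩
  | add x y hx hy ihx ihy =>
    have mono : AddSubgroup.closure (b '' Set.Iic m) ≤ D.rootLattice := by
      rw [AddSubgroup.closure_le]
      rintro _ ⟨j, hj, rfl⟩
      exact F.b_mem hj
    obtain ⟨p, hp, hp'⟩ := ihx (mono hx)
    obtain ⟨q, hq, hq'⟩ := ihy (mono hy)
    refine ⟨p + q, ?_, ?_⟩
    · intro i hi
      simp [hp i hi, hq i hi]
    · simpa [Finset.sum_add_distrib] using hp'.add hq'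
  | neg x hx ihx =>
    have mono : AddSubgroup.closure (b '' Set.Iic m) ≤ D.rootLattice := by
      rw [AddSubgroup.closure_le]
      rintro _ ⟨j, hj, rfl⟩
      exact F.b_mem hj
    obtain ⟨p, hp, hp'⟩ := ihx (mono hx)
    refine ⟨-p, ?_, ?_⟩
    · intro i hi
      simp [hp i hi]
    · simpa [Finset.sum_neg_distrib] using hp'

lemma int_of_mem_rootLattice {x : Module.Dual ℝ V} (hx : x ∈ D.coweightLattice) {v : V}
    (hv : v ∈ D.rootLattice) : ∃ k : ℤ, x v = k := by
  induction hv using AddSubgroup.closure_induction with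
  | mem v hv => exact hx v hv
  | zero => exact ⟨0, by simp⟩
  | add v w _ _ hv hw =>
    obtain ⟨p, hp⟩ := hv
    obtain ⟨q, hq⟩ := hw
    exact ⟨p + q, by simp [hp, hq]⟩
  | neg v _ hv =>
    obtain ⟨p, hp⟩ := hv
    exact ⟨-p, by simp [hp]⟩

/-! ### Lengths of the coroots -/

/-- The arithmetic behind the bound on root lengths: a vector of square length `2 M` which is
crystallographic with respect to the root lattice of `C_{m+1}`, and which is not a proper multiple
of a short simple root, has `M = 1` or `M = 2`. -/
lemma int_cases {m : ℕ} (hm : 2 ≤ m) (a : ℕ → ℤ) (M : ℤ) (hM : 0 < M)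
    (hsum : ∑ i ∈ Finset.range (m + 1), a i ^ 2 = 2 * M)
    (hu : ∀ i ≤ m, M ∣ 2 * a i) (hq : ∀ i < m, M ∣ a i - a (i + 1))
    (hred : ∀ i < m, ∀ t : ℤ, (∀ j ≤ m, a j =
      t * ((if j = i then 1 else 0) - (if j = i + 1 then 1 else 0))) → t ^ 2 = 1) :
    M = 1 ∨ M = 2 := by
  have hsub : ∀ s ⊆ Finset.range (m + 1), ∑ i ∈ s, a i ^ 2 ≤ 2 * M := fun s hs =>
    hsum ▸ Finset.sum_le_sum_of_subset_of_nonneg hs fun i _ _ => sq_nonneg _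
  by_cases h : ∃ i < m, a i ≠ a (i + 1)
  · obtain ⟨i, hi, hne⟩ := h
    obtain ⟨q, hqi⟩ := hq i hi
    have h2 : a i ^ 2 + a (i + 1) ^ 2 ≤ 2 * M := by
      have := hsub {i, i + 1} (by intro j; simp; omega)
      rwa [Finset.sum_pair (by omega)] at this
    have hq0 : q ≠ 0 := by
      rintro rfl
      exact hne (by linarith)
    have hq1 : 1 ≤ q ^ 2 := by
      have := sq_pos_of_ne_zero hq0
      omega
    -- Cauchy–Schwarz for the vector and the simple root `e i - e (i+1)`.
    have h4 : M ^ 2 * q ^ 2 ≤ 4 * M := by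
      have : (a i - a (i + 1)) ^ 2 = M ^ 2 * q ^ 2 := by rw [hqi]; ring
      nlinarith [sq_nonneg (a i + a (i + 1))]
    have hM4 : M ≤ 4 := by nlinarith [sq_nonneg M]
    have hcases : M = 1 ∨ M = 2 ∨ M = 3 ∨ M = 4 := by omega
    rcases hcases with h1 | h1 | rfl | rfl
    · exact Or.inl h1
    · exact Or.inr h1
    · exfalso
      have : (9 : ℤ) ∣ ∑ i ∈ Finset.range (m + 1), a i ^ 2 := by
        refine Finset.dvd_sum fun j hj => ?_
        have h3 := hu j (by simp at hj; omega)
        have h3 : (3 : ℤ) ∣ a j := by omega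
        have := pow_dvd_pow_of_dvd h3 2
        norm_num at this
        exact this
      rw [hsum] at this
      omega
    · exfalso
      have hop : a i + a (i + 1) = 0 := by
        have : (a i - a (i + 1)) ^ 2 = 16 * q ^ 2 := by rw [hqi]; ring
        have h0 : (a i + a (i + 1)) ^ 2 ≤ 0 := by nlinarith
        exact pow_eq_zero_iff (two_ne_zero) |>.1 (le_antisymm h0 (sq_nonneg _))
      have ha2 : a i = 2 * q := by omega
      have h3 : ∀ j ≤ m, j ≠ i → j ≠ i + 1 → a j = 0 := by
        intro j hj hji hji'
        have := hsub {j, i, i + 1} (by intro k; simp; omega)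
        rw [Finset.sum_insert (by simp [hji, hji']), Finset.sum_pair (by omega)] at this
        have h5 : a (i + 1) = - (2 * q) := by omega
        rw [ha2, h5] at this
        have h0 : a j ^ 2 ≤ 0 := by nlinarith
        exact pow_eq_zero_iff (two_ne_zero) |>.1 (le_antisymm h0 (sq_nonneg _))
      have := hred i hi (2 * q) fun j hj => by
        by_cases hji : j = i
        · subst hji
          rw [if_pos rfl, if_neg (by omega)]
          omega
        · by_cases hji' : j = i + 1
          · subst hji'
            rw [if_pos rfl, if_neg (by omega)]
            omega
          · rw [if_neg hji, if_neg hji', h3 j hj hji hji']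
            simp
      nlinarith
  · push Not at h
    have hc : ∀ j ≤ m, a j = a 0 := by
      intro j
      induction j with
      | zero => intro _; rfl
      | succ j ih =>
        intro hj
        rw [← h j (by omega), ih (by omega)]
    have hs : (m + 1 : ℤ) * a 0 ^ 2 = 2 * M := by
      rw [← hsum, Finset.sum_congr rfl fun j hj => by
        rw [hc j (by simp at hj; omega)]]
      simp
    have hk0 : a 0 ≠ 0 := by
      intro h0
      rw [h0] at hs
      omega
    have hle : M ≤ 2 * |a 0| := by
      have := Int.le_of_dvd (by positivity) ((dvd_abs _ _).2 (hu 0 (by omega)))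
      rwa [abs_mul, abs_two] at this
    have hpos : 1 ≤ |a 0| := Int.one_le_abs hk0
    have hm' : (2 : ℤ) ≤ m := by exact_mod_cast hm
    rw [← sq_abs] at hs
    have h4 : (m + 1 : ℤ) * |a 0| ≤ 4 := by nlinarith
    have h1 : |a 0| = 1 := by nlinarith
    rw [h1] at hs
    omega

lemma ext_coords (F : FrameC D φ m b e ε d) {v w : V} (h : ∀ i ≤ m, ε i v = ε i w) : v = w := by
  rw [F.expand v, F.expand w]
  refine Finset.sum_congr rfl fun i hi => ?_
  rw [h i (by simp at hi; omega)]

lemma two_smul_mem (F : FrameC D φ m b e ε d) {i : ℕ} (hi : i ≤ m) :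
    (2 : ℝ) • e i ∈ D.rootLattice := by
  have h := add_mem (add_mem (F.sub_mem_rootLattice hi) (F.sub_mem_rootLattice hi))
    (F.b_mem le_rfl)
  rw [F.b_last] at h
  convert h using 1
  module

/-- Every coroot is as long as one of the simple coroots. For `m = 3` the roots may form
a system of type `F₄` containing the given `C₄`, which is why this is not derived from an
explicit list of the roots. -/
lemma dlen_cases [FiniteDimensional ℝ V] (F : FrameC D φ m b e ε d)
    (hφ : ∀ x y : Module.Dual ℝ V, x (φ y) = 2 * D.Bd x y) (hm : 2 ≤ m)
    {β : V} (hβ : β ∈ D.roots) : D.dlen β = d ∨ D.dlen β = 2 * d := by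
  have hd := F.d_pos
  obtain ⟨a, ha, hs⟩ := F.coords_of_mem (AddSubgroup.subset_closure hβ)
  have key : ∀ i ≤ m, 2 * d * D.coroot β (e i) = D.dlen β * a i := by
    intro i hi
    rw [← F.eps_phi _ hi, phi_coroot hφ hβ, map_smul, ha i hi, smul_eq_mul]
  have hN : D.dlen β * ((∑ i ∈ Finset.range (m + 1), a i ^ 2 : ℤ) : ℝ) = 4 * d := by
    have h2 := congrArg (D.coroot β) (F.expand β)
    rw [D.coroot_self β hβ, map_sum] at h2
    have h3 : D.dlen β * ((∑ i ∈ Finset.range (m + 1), a i ^ 2 : ℤ) : ℝ) =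
        2 * d * ∑ i ∈ Finset.range (m + 1), D.coroot β (ε i β • e i) := by
      push_cast
      rw [Finset.mul_sum, Finset.mul_sum]
      refine Finset.sum_congr rfl fun i hi => ?_
      have hi : i ≤ m := by simp at hi; omega
      rw [map_smul, smul_eq_mul, ha i hi, mul_left_comm, key i hi]
      ring
    rw [h3, ← h2]
    ring
  obtain ⟨M, hM⟩ : Even (∑ i ∈ Finset.range (m + 1), a i ^ 2) := by
    have : ∑ i ∈ Finset.range (m + 1), a i ^ 2 =
        ∑ i ∈ Finset.range (m + 1), a i * (a i - 1) + ∑ i ∈ Finset.range (m + 1), a i := by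
      rw [← Finset.sum_add_distrib]
      exact Finset.sum_congr rfl fun i _ => by ring
    rw [this]
    exact (Finset.even_sum _ fun i _ => Int.even_mul_pred_self _).add hs
  rw [hM] at hN
  push_cast at hN
  have hMd : D.dlen β * M = 2 * d := by linarith
  have hMpos : 0 < M := by
    have : (0 : ℝ) < M := by
      have h1 : 0 < D.dlen β * M := by rw [hMd]; linarith
      exact (mul_pos_iff_of_pos_left (dlen_pos hβ)).1 h1
    exact_mod_cast this
  have hMe : ∀ i ≤ m, (a i : ℝ) = M * D.coroot β (e i) := by
    intro i hi
    have h := key i hi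
    rw [← hMd, mul_assoc] at h
    exact (mul_left_cancel₀ (dlen_pos hβ).ne' h).symm
  have hint : ∀ w ∈ D.rootLattice, ∃ k : ℤ, D.coroot β w = k := fun w hw =>
    int_of_mem_rootLattice (D.crystallographic β hβ) hw
  have hfin := int_cases hm a M hMpos (by rw [hM]; ring)
    (fun i hi => by
      obtain ⟨k, hk⟩ := hint _ (F.two_smul_mem hi)
      refine ⟨k, ?_⟩
      rw [map_smul, smul_eq_mul] at hk
      have := hMe i hi
      have h : (2 * a i : ℝ) = M * k := by rw [this, ← hk]; ring
      exact_mod_cast h)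
    (fun i hi => by
      obtain ⟨k, hk⟩ := hint _ (F.b_mem hi.le)
      refine ⟨k, ?_⟩
      rw [F.b_eq i hi, map_sub] at hk
      have h : (a i - a (i + 1) : ℝ) = M * k := by
        rw [hMe i hi.le, hMe (i + 1) hi, ← hk]; ring
      exact_mod_cast h)
    (fun i hi t ht => by
      have hβt : (t : ℝ) • b i = β := by
        refine F.ext_coords fun j hj => ?_
        rw [ha j hj, ht j hj, F.b_eq i hi, map_smul, map_sub, F.dual j hj i hi.le,
          F.dual j hj (i + 1) hi, smul_eq_mul]
        push_cast
        rfl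
      rcases D.reduced (b i) (F.mem i hi.le) t (hβt ▸ hβ) with h | h
      · have : t = 1 := by exact_mod_cast h
        rw [this]; rfl
      · have : t = -1 := by exact_mod_cast h
        rw [this]; rfl)
  rcases hfin with rfl | rfl
  · right
    simpa using hMd
  · left
    push_cast at hMd
    linarith

/-- The last simple coroot is of minimal length, so the normalization forces `d = 1`. -/
lemma d_eq_one [FiniteDimensional ℝ V] (F : FrameC D φ m b e ε d)
    (hφ : ∀ x y : Module.Dual ℝ V, x (φ y) = 2 * D.Bd x y) (hm : 2 ≤ m)
    (hnorm : D.NormalizedDual) : d = 1 := by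
  rw [F.d_eq]
  refine hnorm _ ⟨F.mem m le_rfl, fun β hβ _ => ?_⟩
  change D.dlen (b m) ≤ D.dlen β
  rw [← F.d_eq]
  have := F.d_pos
  rcases F.dlen_cases hφ hm hβ with h | h <;> linarith

lemma dlen_int [FiniteDimensional ℝ V] (F : FrameC D φ m b e ε 1)
    (hφ : ∀ x y : Module.Dual ℝ V, x (φ y) = 2 * D.Bd x y) (hm : 2 ≤ m)
    {β : V} (hβ : β ∈ D.roots) : ∃ k : ℤ, D.dlen β = k := by
  rcases F.dlen_cases hφ hm hβ with h | h
  · exact ⟨1, by simp [h]⟩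
  · exact ⟨2, by simp [h]⟩

/-! ### Coweights and weights -/

/-- The doubled coordinates of a coweight are integers, all of the same parity. -/
lemma coweight_coords (F : FrameC D φ m b e ε 1) {x : Module.Dual ℝ V}
    (hx : x ∈ D.coweightLattice) :
    ∃ p : ℕ → ℤ, (∀ i ≤ m, 2 * x (e i) = p i) ∧ ∀ i ≤ m, Even (p i - p m) := by
  have h1 : ∀ i, ∃ k : ℤ, i ≤ m → 2 * x (e i) = k := by
    intro i
    by_cases hi : i ≤ m
    · obtain ⟨k, hk⟩ := int_of_mem_rootLattice hx (F.two_smul_mem hi)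
      rw [map_smul, smul_eq_mul] at hk
      exact ⟨k, fun _ => hk⟩
    · exact ⟨0, fun h => absurd h hi⟩
  choose p hp using h1
  refine ⟨p, hp, fun i hi => ?_⟩
  obtain ⟨k, hk⟩ := int_of_mem_rootLattice hx (F.sub_mem_rootLattice hi)
  rw [map_sub] at hk
  refine ⟨k, ?_⟩
  have : (p i - p m : ℝ) = k + k := by rw [← hp i hi, ← hp m le_rfl, ← hk]; ring
  exact_mod_cast this

lemma even_sum_iff {p : ℕ → ℤ} (hp : ∀ i ≤ m, Even (p i - p m)) :
    Even (∑ i ∈ Finset.range (m + 1), p i) ↔ Even ((m + 1 : ℤ) * p m) := by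
  rw [← Int.even_sub]
  have : ∑ i ∈ Finset.range (m + 1), p i - (m + 1 : ℤ) * p m =
      ∑ i ∈ Finset.range (m + 1), (p i - p m) := by simp
  rw [this]
  exact Finset.even_sum _ fun i hi => hp i (by simp at hi; omega)

lemma mem_corootLattice (F : FrameC D φ m b e ε d) {x : Module.Dual ℝ V}
    (hx : ∀ i ≤ m, ∃ k : ℤ, x (e i) = k) : x ∈ D.corootLattice := by
  rw [F.expand_dual x]
  refine sum_mem fun i hi => ?_
  have hi : i ≤ m := by simp at hi; omega
  obtain ⟨k, hk⟩ := hx i hi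
  have h := zsmul_mem (F.eps_mem_corootLattice hi) k
  rwa [← Int.cast_smul_eq_zsmul ℝ, ← hk] at h

lemma weight_coords (F : FrameC D φ m b e ε d) {y : V} (hy : y ∈ D.weightLattice) :
    ∃ a : ℕ → ℤ, ∀ i ≤ m, ε i y = a i := by
  have key : ∀ x ∈ D.corootLattice, ∃ k : ℤ, x y = k := by
    intro x hx
    induction hx using AddSubgroup.closure_induction with
    | mem x hx =>
      obtain ⟨α, hα, rfl⟩ := hx
      exact hy α hα
    | zero => exact ⟨0, by simp⟩
    | add v w _ _ hv hw =>
      obtain ⟨p, hp⟩ := hv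
      obtain ⟨q, hq⟩ := hw
      exact ⟨p + q, by simp [hp, hq]⟩
    | neg v _ hv =>
      obtain ⟨p, hp⟩ := hv
      exact ⟨-p, by simp [hp]⟩
  have h1 : ∀ i, ∃ k : ℤ, i ≤ m → ε i y = k := by
    intro i
    by_cases hi : i ≤ m
    · obtain ⟨k, hk⟩ := key _ (F.eps_mem_corootLattice hi)
      exact ⟨k, fun _ => hk⟩
    · exact ⟨0, fun h => absurd h hi⟩
  choose a ha using h1
  exact ⟨a, ha⟩

lemma eps_phi_one (F : FrameC D φ m b e ε 1) (x : Module.Dual ℝ V) {i : ℕ} (hi : i ≤ m) :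
    ε i (φ x) = 2 * x (e i) := by
  rw [F.eps_phi x hi, mul_one]

lemma phi_corootLattice [FiniteDimensional ℝ V] (F : FrameC D φ m b e ε 1)
    (hφ : ∀ x y : Module.Dual ℝ V, x (φ y) = 2 * D.Bd x y) (hm : 2 ≤ m)
    {x : Module.Dual ℝ V} (hx : x ∈ D.corootLattice) : φ x ∈ D.rootLattice := by
  induction hx using AddSubgroup.closure_induction with
  | mem x hx =>
    obtain ⟨α, hα, rfl⟩ := hx
    obtain ⟨k, hk⟩ := F.dlen_int hφ hm hα
    rw [phi_coroot hφ hα, hk, Int.cast_smul_eq_zsmul]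
    exact zsmul_mem (AddSubgroup.subset_closure hα) _
  | zero => simp
  | add v w _ _ hv hw =>
    rw [map_add]
    exact add_mem hv hw
  | neg v _ hv =>
    rw [map_neg]
    exact neg_mem hv

/-- The spin coweight `(ε 0 + ⋯ + ε m) / 2`, which generates `Λ_w∨` modulo `Λ_r∨`. -/
lemma exists_spin (F : FrameC D φ m b e ε 1) :
    ∃ h ∈ D.coweightLattice, ∀ i ≤ m, ε i (φ h) = 1 := by
  refine ⟨(1 / 2 : ℝ) • ∑ i ∈ Finset.range (m + 1), ε i, ?_, ?_⟩
  · intro α hα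
    obtain ⟨a, ha, k, hk⟩ := F.coords_of_mem (AddSubgroup.subset_closure hα)
    refine ⟨k, ?_⟩
    rw [LinearMap.smul_apply, LinearMap.sum_apply, smul_eq_mul]
    rw [Finset.sum_congr rfl fun i hi => ha i (by simp at hi; omega), ← Int.cast_sum, hk]
    push_cast
    ring
  · intro i hi
    rw [F.eps_phi_one _ hi, LinearMap.smul_apply, LinearMap.sum_apply,
      Finset.sum_eq_single_of_mem i (by simp; omega)]
    · rw [F.dual i hi i hi]
      norm_num
    · intro j hj hji
      rw [F.dual j (by simp at hj; omega) i hi, if_neg hji]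

end FrameC

end RootSystemData

/-! ### The map on discriminant groups -/

/-- For `R` of type `C_n`, `n ≥ 3`, the induced map
`ρ : Λ_w∨/Λ_r∨ → Λ_w/Λ_r` is zero if `n` is even, and an isomorphism of
groups of order `2` if `n` is odd. -/
theorem stmt6 {V : Type} [AddCommGroup V] [Module ℝ V] [FiniteDimensional ℝ V]
    (D : RootSystemData V)
    (hnormV : D.NormalizedPrimal) (hnormVd : D.NormalizedDual)
    (φ : Module.Dual ℝ V →ₗ[ℝ] V)
    (hφ : ∀ x y : Module.Dual ℝ V, x (φ y) = 2 * D.Bd x y)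
    (n : ℕ) (hn : 3 ≤ n)
    -- a base of simple roots of type `C_n`
    (b : Fin n → V) (hb : ∀ i, b i ∈ D.roots)
    (hlin : LinearIndependent ℝ b)
    (hspan : Submodule.span ℝ (Set.range b) = ⊤)
    (hgen : ∀ α ∈ D.roots, α ∈ AddSubgroup.closure (Set.range b))
    (hcartan : ∀ i j, D.coroot (b j) (b i) = ((cartanC n i j : ℤ) : ℝ)) :
    (Even n → ∀ x ∈ D.coweightLattice, φ x ∈ D.rootLattice) ∧
    (Odd n →
      -- ρ is injective
      (∀ x ∈ D.coweightLattice, φ x ∈ D.rootLattice → x ∈ D.corootLattice) ∧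
      -- ρ is surjective
      (∀ y ∈ D.weightLattice, ∃ x ∈ D.coweightLattice, y - φ x ∈ D.rootLattice) ∧
      -- ρ is nonzero
      (∃ x ∈ D.coweightLattice, φ x ∉ D.rootLattice) ∧
      -- `Λ_w∨/Λ_r∨` has order 2
      (∀ x ∈ D.coweightLattice, x + x ∈ D.corootLattice) ∧
      (∃ x ∈ D.coweightLattice, x ∉ D.corootLattice) ∧
      -- `Λ_w/Λ_r` has order 2
      (∀ y ∈ D.weightLattice, y + y ∈ D.rootLattice) ∧
      (∃ y ∈ D.weightLattice, y ∉ D.rootLattice)) := by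
  
  obtain ⟨m, rfl⟩ : ∃ m, n = m + 1 := ⟨n - 1, by omega⟩
  have hm : 2 ≤ m := by omega
  -- Extend the simple roots by the junk value `0` beyond index `m`, to index them by `ℕ`.
  let b' : ℕ → V := fun k => if h : k < m + 1 then b ⟨k, h⟩ else 0
  have hb' : ∀ k (h : k < m + 1), b' k = b ⟨k, h⟩ := fun k h => dif_pos h
  have himg : b' '' Set.Iic m = Set.range b := by
    ext v
    constructor
    · rintro ⟨k, hk, rfl⟩
      simp only [Set.mem_Iic] at hk
      exact ⟨⟨k, by omega⟩, (hb' k (by omega)).symm⟩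
    · rintro ⟨⟨k, hk⟩, rfl⟩
      exact ⟨k, by simp only [Set.mem_Iic]; omega, hb' k hk⟩
  obtain ⟨e, ε, d, F⟩ := RootSystemData.exists_frameC (D := D) hφ hm b'
    (fun i hi => by rw [hb' i (by omega)]; exact hb _)
    (by rw [himg]; exact hspan) (by rw [himg]; exact hgen)
    (by
      intro i hi j hj
      rw [hb' i (by omega), hb' j (by omega), hcartan]
      simp only [cartanC, Fin.mk.injEq]
      split_ifs <;> first | omega | norm_num)
  obtain rfl := F.d_eq_one hφ hm hnormVd
  constructor
  · intro hev x hx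
    obtain ⟨p, hp, hpm⟩ := F.coweight_coords hx
    refine F.mem_rootLattice p (fun i hi => by rw [F.eps_phi_one x hi, hp i hi]) ?_
    rw [RootSystemData.FrameC.even_sum_iff hpm]
    exact Even.mul_right (by exact_mod_cast hev) _
  · intro hodd
    have hoddZ : Odd ((m : ℤ) + 1) := by exact_mod_cast hodd
    obtain ⟨h, hh, hh1⟩ := F.exists_spin
    have hφh : φ h ∉ D.rootLattice := by
      intro hmem
      obtain ⟨a, ha, hs⟩ := F.coords_of_mem hmem
      have h1 : ∀ i ∈ Finset.range (m + 1), a i = 1 := by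
        intro i hi
        have hi : i ≤ m := by simp at hi; omega
        have := (ha i hi).symm.trans (hh1 i hi)
        exact_mod_cast this
      rw [Finset.sum_congr rfl h1] at hs
      simp only [Finset.sum_const, Finset.card_range, nsmul_eq_mul, mul_one] at hs
      push_cast at hs
      exact Int.not_even_iff_odd.2 hoddZ hs
    refine ⟨?_, ?_, ⟨h, hh, hφh⟩, ?_, ?_, ?_, ?_⟩
    · intro x hx hmem
      obtain ⟨p, hp, hpm⟩ := F.coweight_coords hx
      obtain ⟨a, ha, hs⟩ := F.coords_of_mem hmem
      have hap : ∀ i ∈ Finset.range (m + 1), a i = p i := by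
        intro i hi
        have hi : i ≤ m := by simp at hi; omega
        have := (ha i hi).symm.trans ((F.eps_phi_one x hi).trans (hp i hi))
        exact_mod_cast this
      rw [Finset.sum_congr rfl hap, RootSystemData.FrameC.even_sum_iff hpm, Int.even_mul] at hs
      have hlast : Even (p m) := hs.resolve_left (Int.not_even_iff_odd.2 hoddZ)
      refine F.mem_corootLattice fun i hi => ?_
      obtain ⟨k, hk⟩ : Even (p i) := (Int.even_sub.1 (hpm i hi)).2 hlast
      refine ⟨k, ?_⟩
      have := hp i hi
      rw [hk] at this
      push_cast at this
      linarith
    · intro y hy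
      obtain ⟨a, ha⟩ := F.weight_coords hy
      by_cases hs : Even (∑ i ∈ Finset.range (m + 1), a i)
      · refine ⟨0, fun α _ => ⟨0, by simp⟩, ?_⟩
        rw [map_zero, sub_zero]
        exact F.mem_rootLattice a ha hs
      · refine ⟨h, hh, F.mem_rootLattice (fun i => a i - 1) (fun i hi => ?_) ?_⟩
        · rw [map_sub, ha i hi, hh1 i hi]
          push_cast
          rfl
        · rw [Finset.sum_sub_distrib]
          simp only [Finset.sum_const, Finset.card_range, nsmul_eq_mul, mul_one]
          push_cast
          exact (Int.not_even_iff_odd.1 hs).sub_odd hoddZ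
    · intro x hx
      obtain ⟨p, hp, -⟩ := F.coweight_coords hx
      exact F.mem_corootLattice fun i hi =>
        ⟨p i, by rw [← hp i hi, LinearMap.add_apply]; ring⟩
    · exact ⟨h, hh, fun hmem => hφh (F.phi_corootLattice hφ hm hmem)⟩
    · intro y hy
      obtain ⟨a, ha⟩ := F.weight_coords hy
      refine F.mem_rootLattice (fun i => a i + a i) (fun i hi => ?_) ?_
      · rw [map_add, ha i hi]
        push_cast
        rfl
      · rw [Finset.sum_add_distrib]
        exact ⟨_, rfl⟩
    · refine ⟨φ h, fun α hα => ?_, hφh⟩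
      obtain ⟨k, hk⟩ := hh α hα
      obtain ⟨l, hl⟩ := F.dlen_int hφ hm hα
      refine ⟨k * l, ?_⟩
      rw [hφ, RootSystemData.two_mul_Bd hα, hk, hl]
      push_cast
      rfl
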